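/- arXiv:1408.5782 — 3 statements merged into one kernel-verified Lean document; each statement's English description precedes it below -/
import Mathlib

section
/- Let s = (q²+1)/2 and t = 1 + r((q−1)/2 + (q²+1)/2). Then q²·s ≡ s (mod N) and q²·t ≡ t (mod N), and s is not congruent to t modulo N; consequently the q²-cyclotomic cosets of s and of t modulo N are the singletons {s} and {t}. -/
/-!
Since `2s = q² + 1`, we have `N = 2rs` and `t = (q + 2)s = s + N/2`. As `q` is odd,
`q² - 1 = (q - 1)r` is divisible by `2r`, so multiplication by `q²` fixes every multiple of `s`
modulo `2rs = N`, in particular `s` and `t`. These two differ by half of the nonzero modulus.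
-/

/-- The `m`-cyclotomic coset of `a` modulo `N`, as the set of the remainders modulo `N` of the
integers `a * m ^ k`. The `q²`-cyclotomic cosets of the theorem are the case `m = q ^ 2`. -/
def cyclotomicCoset (m N a : ℤ) : Set ℤ :=
  {x | ∃ k : ℕ, x = (a * m ^ k) % N}

theorem pow_mul_modEq_of_mul_modEq {m N a : ℤ} (h : m * a ≡ a [ZMOD N]) (k : ℕ) :
    m ^ k * a ≡ a [ZMOD N] := by
  induction k with
  | zero => rw [pow_zero, one_mul]
  | succ k ih =>
    calc m ^ (k + 1) * a = m ^ k * (m * a) := by rw [pow_succ, mul_assoc]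
      _ ≡ m ^ k * a [ZMOD N] := h.mul_left _
      _ ≡ a [ZMOD N] := ih

theorem cyclotomicCoset_eq_singleton {m N a : ℤ} (h : m * a ≡ a [ZMOD N]) :
    cyclotomicCoset m N a = {a % N} := by
  have remainder_eq (k : ℕ) : (a * m ^ k) % N = a % N := by
    rw [mul_comm]
    exact pow_mul_modEq_of_mul_modEq h k
  simp only [cyclotomicCoset, remainder_eq, exists_const, Set.ofPred_eq_eq_singleton]

theorem sq_modEq_one_of_odd {q : ℤ} (hq : Odd q) : q ^ 2 ≡ 1 [ZMOD 2 * (q + 1)] := by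
  obtain ⟨u, rfl⟩ := hq
  exact (Int.modEq_iff_dvd.2 ⟨u, by ring⟩).symm

theorem not_modEq_add_half_modulus {d : ℤ} (hd : d ≠ 0) (a : ℤ) :
    ¬ a ≡ a + d [ZMOD 2 * d] := by
  intro h
  have two_mul_dvd : 2 * d ∣ 1 * d := by
    simpa only [add_sub_cancel_left, one_mul] using h.dvd
  have two_dvd_one : (2 : ℤ) ∣ 1 := (mul_dvd_mul_iff_right hd).1 two_mul_dvd
  omega

theorem cyclotomic_cosets_of_s_and_t_are_singletons_general {q n r N s u t : ℤ} (hq : q ≠ -1)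
    (hn : n = q ^ 2 + 1) (hr : r = q + 1) (hN : N = r * n)
    (hs : 2 * s = q ^ 2 + 1) (hu : 2 * u = q - 1) (ht : t = 1 + r * (u + s)) :
    q ^ 2 * s ≡ s [ZMOD N] ∧
    q ^ 2 * t ≡ t [ZMOD N] ∧
    ¬ (s ≡ t [ZMOD N]) ∧
    cyclotomicCoset (q ^ 2) N s = {s % N} ∧
    cyclotomicCoset (q ^ 2) N t = {t % N} := by
  have modulus_eq : N = 2 * (r * s) := by rw [hN, hn, ← hs]; ring
  have t_eq_add_half : t = s + r * s := by
    have r_mul_u_eq : r * u = s - 1 := by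
      apply mul_left_cancel₀ (two_ne_zero' ℤ)
      linear_combination r * hu + (q - 1) * hr - hs
    linear_combination ht + r_mul_u_eq
  have half_ne_zero : r * s ≠ 0 :=
    mul_ne_zero (by omega) (by nlinarith [sq_nonneg q])
  have s_fixed : q ^ 2 * s ≡ s [ZMOD N] := by
    have q_odd : Odd q := ⟨u, by omega⟩
    rw [modulus_eq, hr, ← mul_assoc]
    simpa only [one_mul] using (sq_modEq_one_of_odd q_odd).mul_right' (c := s)
  have t_fixed : q ^ 2 * t ≡ t [ZMOD N] :=
    calc q ^ 2 * t = (r + 1) * (q ^ 2 * s) := by rw [t_eq_add_half]; ring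
      _ ≡ (r + 1) * s [ZMOD N] := s_fixed.mul_left _
      _ = t := by rw [t_eq_add_half]; ring
  refine ⟨s_fixed, t_fixed, ?_, cyclotomicCoset_eq_singleton s_fixed,
    cyclotomicCoset_eq_singleton t_fixed⟩
  rw [modulus_eq, t_eq_add_half]
  exact not_modEq_add_half_modulus half_ne_zero s

/-- Let `s = (q²+1)/2` and `t = 1 + r((q−1)/2 + (q²+1)/2)`. Then `q²·s ≡ s (mod N)`
and `q²·t ≡ t (mod N)`, and `s ≢ t (mod N)`; consequently the `q²`-cyclotomic cosets of `s` and
of `t` modulo `N` are the singletons `{s}` and `{t}`. -/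
theorem cyclotomic_cosets_of_s_and_t_are_singletons
    (q : ℤ) (hq : ∃ p k : ℕ, Nat.Prime p ∧ Odd p ∧ 0 < k ∧ q = (p : ℤ) ^ k)
    (n r N s u t : ℤ) (hn : n = q ^ 2 + 1) (hr : r = q + 1) (hN : N = r * n)
    (hs : 2 * s = q ^ 2 + 1) (hu : 2 * u = q - 1) (ht : t = 1 + r * (u + s)) :
    q ^ 2 * s ≡ s [ZMOD N] ∧
    q ^ 2 * t ≡ t [ZMOD N] ∧
    ¬ (s ≡ t [ZMOD N]) ∧
    {x : ℤ | ∃ k : ℕ, x = (s * q ^ (2 * k)) % N} = {s % N} ∧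
    {x : ℤ | ∃ k : ℕ, x = (t * q ^ (2 * k)) % N} = {t % N} := by
  have q_ne : q ≠ -1 := by
    obtain ⟨p, k, -, -, -, rfl⟩ := hq
    have : 0 ≤ (p : ℤ) ^ k := by positivity
    omega
  simpa only [cyclotomicCoset, ← pow_mul] using
    cyclotomic_cosets_of_s_and_t_are_singletons_general q_ne hn hr hN hs hu ht
end

section
/- For all nonnegative integers i and j: (a) −q(s − ri) ≡ s − rj (mod N) holds if and only if qi + j ≡ s (mod n); and (b) −q(s − ri) ≡ s + rj (mod N) holds if and only if qi ≡ s + j (mod n). -/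
/-!
Since `-q ≡ 1` modulo `r = q + 1`, the two sides of each congruence modulo `N = r * n` differ by a
multiple of `r`, and the factor `r ≠ 0` cancels against the one in the modulus.
-/

theorem modEq_mul_iff_of_sub_eq_mul_sub {r a b c d : ℤ} (n : ℤ) (hr : r ≠ 0)
    (h : b - a = r * (d - c)) : a ≡ b [ZMOD r * n] ↔ c ≡ d [ZMOD n] := by
  rw [Int.modEq_iff_dvd, Int.modEq_iff_dvd, h, mul_dvd_mul_iff_left hr]

theorem neg_q_mul_modEq_iff_general {q : ℤ} (hq : q ≠ -1) {n r N : ℤ} (hr : r = q + 1)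
    (hN : N = r * n) (s i j : ℤ) :
    ((-q * (s - r * i) ≡ s - r * j [ZMOD N]) ↔ (q * i + j ≡ s [ZMOD n])) ∧
    ((-q * (s - r * i) ≡ s + r * j [ZMOD N]) ↔ (q * i ≡ s + j [ZMOD n])) := by
  have r_ne_zero : r ≠ 0 := hr ▸ mt eq_neg_of_add_eq_zero_left hq
  have minus_case_sub_eq : s - r * j - -q * (s - r * i) = r * (s - (q * i + j)) := by rw [hr]; ring
  have plus_case_sub_eq : s + r * j - -q * (s - r * i) = r * (s + j - q * i) := by rw [hr]; ring
  rw [hN]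
  exact ⟨modEq_mul_iff_of_sub_eq_mul_sub n r_ne_zero minus_case_sub_eq,
    modEq_mul_iff_of_sub_eq_mul_sub n r_ne_zero plus_case_sub_eq⟩

/-- For all nonnegative integers `i` and `j`:
(a) `−q(s − ri) ≡ s − rj (mod N)` iff `qi + j ≡ s (mod n)`; and
(b) `−q(s − ri) ≡ s + rj (mod N)` iff `qi ≡ s + j (mod n)`. -/
theorem neg_q_mul_modEq_iff
    (q : ℤ) (hq : ∃ p k : ℕ, Nat.Prime p ∧ Odd p ∧ 0 < k ∧ q = (p : ℤ) ^ k)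
    (n r N s : ℤ) (hn : n = q ^ 2 + 1) (hr : r = q + 1) (hN : N = r * n)
    (hs : 2 * s = q ^ 2 + 1)
    (i j : ℤ) (hi : 0 ≤ i) (hj : 0 ≤ j) :
    ((-q * (s - r * i) ≡ s - r * j [ZMOD N]) ↔ (q * i + j ≡ s [ZMOD n])) ∧
    ((-q * (s - r * i) ≡ s + r * j [ZMOD N]) ↔ (q * i ≡ s + j [ZMOD n])) := by
  obtain ⟨p, k, -, -, -, rfl⟩ := hq
  have q_ne_neg_one : (p : ℤ) ^ k ≠ -1 := (neg_one_lt_zero.trans_le (by positivity)).ne'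
  exact neg_q_mul_modEq_iff_general q_ne_neg_one hr hN s i j
end

section
/- The code C is an MDS code with parameters [q²+1, q² − 2δ, 2δ + 2]: its dimension over K equals q² − 2δ = n − (2δ+1), and the least Hamming weight of a nonzero codeword of C equals exactly 2δ + 2 (meeting the Singleton bound). -/
set_option synthInstance.maxHeartbeats 400000

/-! The key point is that `β ^ s` lies in `K`, while `β ^ r` has order `n ∣ |K| + 1`, so the
Frobenius `x ↦ x ^ |K|` of the quadratic extension `F / K` inverts it. The `2δ + 1` checks are
therefore permuted by the Frobenius: the central one takes values in `K`, the others form `δ`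
conjugate pairs, and together they cost only `1 + 2δ` dimensions over `K`. On the other hand they
are consecutive powers of the distinct locators `β ^ (r k)`, so a Vandermonde determinant forces
every nonzero codeword to have weight at least `2δ + 2`. The Singleton bound turns both
inequalities into equalities. -/

section Singleton

variable {ι : Type*} [Fintype ι]

theorem hammingNorm_add_card_le_of_forall_mem_eq_zero {β : ι → Type*} [∀ i, Zero (β i)]
    [∀ i, DecidableEq (β i)] {c : ∀ i, β i} {S : Finset ι} (hc : ∀ i ∈ S, c i = 0) :
    hammingNorm c + S.card ≤ Fintype.card ι := by
  classical
  have hdisj : Disjoint ({i | c i ≠ 0} : Finset ι) S :=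
    Finset.disjoint_left.mpr fun i hi hiS => (Finset.mem_filter.mp hi).2 (hc i hiS)
  exact (Finset.card_union_of_disjoint hdisj).symm.trans_le (Finset.card_le_univ _)

theorem exists_hammingNorm_le_of_lt_finrank {K : Type*} [Field K] [DecidableEq K]
    (C : Submodule K (ι → K)) {m : ℕ} (hC : Fintype.card ι - m < Module.finrank K C) :
    ∃ c ∈ C, c ≠ 0 ∧ hammingNorm c ≤ m := by
  obtain ⟨S, -, hS⟩ := Finset.exists_subset_card_eq
    ((Nat.sub_le (Fintype.card ι) m).trans_eq Finset.card_univ.symm)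
  let restrict : C →ₗ[K] (S → K) := LinearMap.funLeft K K Subtype.val ∘ₗ C.subtype
  have hker : restrict.ker ≠ ⊥ := LinearMap.ker_ne_bot_of_finrank_lt (by simpa [hS] using hC)
  obtain ⟨c, hc, hne⟩ := Submodule.exists_mem_ne_zero_of_ne_bot hker
  have hnorm : hammingNorm (c : ι → K) + S.card ≤ Fintype.card ι :=
    hammingNorm_add_card_le_of_forall_mem_eq_zero fun i hi => congrFun hc ⟨i, hi⟩
  refine ⟨c, c.2, by simpa using hne, ?_⟩
  omega

end Singleton

theorem lt_hammingNorm_of_forall_sum_mul_pow_eq_zero {ι R : Type*} [Fintype ι] [CommRing R]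
    [IsDomain R] [DecidableEq R] {x d : ι → R} (hx : Function.Injective x) (hd : d ≠ 0) {m : ℕ}
    (h : ∀ j < m, ∑ k, d k * x k ^ j = 0) : m < hammingNorm d := by
  by_contra! hle
  let S : Finset ι := {k | d k ≠ 0}
  have hsupp : (fun a : Fin S.card => d (S.equivFin.symm a)) = 0 := by
    refine Matrix.eq_zero_of_forall_pow_sum_mul_pow_eq_zero
      (hx.comp (Subtype.val_injective.comp S.equivFin.symm.injective)) fun j => ?_
    calc ∑ a, d (S.equivFin.symm a) * x (S.equivFin.symm a) ^ (j : ℕ)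
        = ∑ k : S, d k * x k ^ (j : ℕ) :=
          S.equivFin.symm.sum_comp fun k : S => d k * x k ^ (j : ℕ)
      _ = ∑ k ∈ S, d k * x k ^ (j : ℕ) := S.sum_coe_sort fun k => d k * x k ^ (j : ℕ)
      _ = ∑ k, d k * x k ^ (j : ℕ) :=
          Finset.sum_subset S.subset_univ fun k _ hk => by simp_all [S]
      _ = 0 := h j (j.2.trans_le hle)
  refine hd (funext fun k => by_contra fun hk => hk ?_)
  simpa using congrFun hsupp (S.equivFin ⟨k, by simpa [S] using hk⟩)

section SymmetricCode

variable {ι K F : Type*} [Fintype ι] [Field K] [Field F] [Algebra K F]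

/-- The `i`-th power-sum syndrome `∑ k, c k * w k * x k ^ i` of a word `c` over `K`, for locators
`x` in the extension `F` and column multipliers `w`. Exponents are integers, so that windows of
exponents centred at `0` can be used. -/
def syndrome (w : ι → K) (x : ι → F) (i : ℤ) : (ι → K) →ₗ[K] F :=
  Fintype.linearCombination K fun k => w k • x k ^ i

theorem syndrome_apply (w : ι → K) (x : ι → F) (i : ℤ) (c : ι → K) :
    syndrome w x i c = ∑ k, c k • w k • x k ^ i :=
  Fintype.linearCombination_apply ..

theorem syndrome_zero_apply (w : ι → K) (x : ι → F) (c : ι → K) :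
    syndrome w x 0 c = algebraMap K F (∑ k, c k * w k) := by
  simp [syndrome_apply, Algebra.smul_def]

theorem map_syndrome {σ : F →ₐ[K] F} {x : ι → F} (hσ : ∀ k, σ (x k) = (x k)⁻¹) (w : ι → K)
    (i : ℤ) (c : ι → K) : σ (syndrome w x i c) = syndrome w x (-i) c := by
  simp only [syndrome_apply, map_sum, map_smul, map_zpow₀, hσ, inv_zpow, zpow_neg]

/-- The code over `K` defined by the vanishing of the syndromes with exponents in `[-δ, δ]`: the
subfield subcode of a generalized Reed–Solomon code over `F` when the locators `x` are distinct and
nonzero and the multipliers `w` are nonzero. -/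
def symmetricCode (w : ι → K) (x : ι → F) (δ : ℕ) : Submodule K (ι → K) :=
  ⨅ i ∈ Set.Icc (-δ : ℤ) δ, (syndrome w x i).ker

theorem mem_symmetricCode {w : ι → K} {x : ι → F} {δ : ℕ} {c : ι → K} :
    c ∈ symmetricCode w x δ ↔ ∀ i : ℤ, -δ ≤ i → i ≤ δ → syndrome w x i c = 0 := by
  simp [symmetricCode]

theorem mem_symmetricCode_iff_of_map_eq_inv {σ : F →ₐ[K] F} {x : ι → F}
    (hσ : ∀ k, σ (x k) = (x k)⁻¹) {w : ι → K} {δ : ℕ} {c : ι → K} :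
    c ∈ symmetricCode w x δ ↔ ∀ j ≤ δ, syndrome w x j c = 0 := by
  refine mem_symmetricCode.trans ⟨fun h j hj => h j (by omega) (by omega), fun h i hi hi' => ?_⟩
  obtain ⟨j, rfl | rfl⟩ := Int.eq_nat_or_neg i
  · exact h j (by omega)
  · rw [← map_syndrome hσ, h j (by omega), map_zero]

theorem card_le_finrank_symmetricCode_add [Algebra.IsQuadraticExtension K F] {σ : F →ₐ[K] F}
    {x : ι → F} (hσ : ∀ k, σ (x k) = (x k)⁻¹) (w : ι → K) (δ : ℕ) :
    Fintype.card ι ≤ Module.finrank K (symmetricCode w x δ) + (2 * δ + 1) := by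
  let checks : (ι → K) →ₗ[K] K × (Fin δ → F) :=
    (Fintype.linearCombination K w).prod (LinearMap.pi fun j => syndrome w x (j + 1 : ℕ))
  have hker : checks.ker ≤ symmetricCode w x δ := by
    intro c hc
    obtain ⟨h₀, hpos⟩ : ∑ k, c k * w k = 0 ∧ ∀ j : Fin δ, syndrome w x (j + 1 : ℕ) c = 0 := by
      simpa [checks, Fintype.linearCombination_apply, funext_iff] using hc
    rw [mem_symmetricCode_iff_of_map_eq_inv hσ]
    rintro (_ | j) hj
    · rw [Nat.cast_zero, syndrome_zero_apply, h₀, map_zero]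
    · exact hpos ⟨j, hj⟩
  have hrange : Module.finrank K checks.range ≤ 1 + δ * 2 := by
    simpa [Module.finrank_pi_fintype, Algebra.IsQuadraticExtension.finrank_eq_two K F]
      using checks.range.finrank_le
  calc Fintype.card ι = Module.finrank K checks.range + Module.finrank K checks.ker := by
        rw [checks.finrank_range_add_finrank_ker, Module.finrank_pi]
    _ ≤ (1 + δ * 2) + Module.finrank K (symmetricCode w x δ) :=
        add_le_add hrange (Submodule.finrank_mono hker)
    _ = Module.finrank K (symmetricCode w x δ) + (2 * δ + 1) := by ring

variable {w : ι → K} {x : ι → F} {δ : ℕ}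

theorem lt_hammingNorm_of_mem_symmetricCode [DecidableEq K] (hw : ∀ k, w k ≠ 0)
    (hx₀ : ∀ k, x k ≠ 0) (hx : Function.Injective x) {c : ι → K} (hc : c ∈ symmetricCode w x δ)
    (hne : c ≠ 0) :
    2 * δ + 1 < hammingNorm c := by
  classical
  let d : ι → F := fun k => c k • w k • x k ^ (-δ : ℤ)
  have hd₀ (k : ι) : d k = 0 ↔ c k = 0 := by simp [d, hw k, hx₀ k]
  have hnorm : hammingNorm d = hammingNorm c := by simp only [hammingNorm, ne_eq, hd₀]
  have hdne : d ≠ 0 := by rwa [← hammingNorm_ne_zero_iff, hnorm, hammingNorm_ne_zero_iff]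
  rw [← hnorm]
  refine lt_hammingNorm_of_forall_sum_mul_pow_eq_zero hx hdne fun j hj => ?_
  rw [← mem_symmetricCode.mp hc (-δ + j) (by omega) (by omega), syndrome_apply]
  simp only [d, smul_mul_assoc, zpow_add₀ (hx₀ _), zpow_natCast]

variable [Algebra.IsQuadraticExtension K F] {σ : F →ₐ[K] F}

theorem finrank_symmetricCode (hw : ∀ k, w k ≠ 0) (hx₀ : ∀ k, x k ≠ 0)
    (hx : Function.Injective x) (hσ : ∀ k, σ (x k) = (x k)⁻¹) :
    Module.finrank K (symmetricCode w x δ) = Fintype.card ι - (2 * δ + 1) := by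
  classical
  refine le_antisymm (not_lt.mp fun hlt => ?_)
    (Nat.sub_le_of_le_add (card_le_finrank_symmetricCode_add hσ w δ))
  obtain ⟨c, hc, hne, hle⟩ := exists_hammingNorm_le_of_lt_finrank _ hlt
  exact hle.not_gt (lt_hammingNorm_of_mem_symmetricCode hw hx₀ hx hc hne)

theorem exists_mem_symmetricCode_hammingNorm_eq [DecidableEq K] (hw : ∀ k, w k ≠ 0)
    (hx₀ : ∀ k, x k ≠ 0) (hx : Function.Injective x) (hσ : ∀ k, σ (x k) = (x k)⁻¹)
    (hδ : 2 * δ + 1 < Fintype.card ι) :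
    ∃ c ∈ symmetricCode w x δ, c ≠ 0 ∧ hammingNorm c = 2 * δ + 2 := by
  obtain ⟨c, hc, hne, hle⟩ := exists_hammingNorm_le_of_lt_finrank (symmetricCode w x δ)
    (m := 2 * δ + 2) (by rw [finrank_symmetricCode hw hx₀ hx hσ]; omega)
  exact ⟨c, hc, hne, hle.antisymm (lt_hammingNorm_of_mem_symmetricCode hw hx₀ hx hc hne)⟩

end SymmetricCode

section FixedField

variable {F : Type*} [Field F] [Fintype F] {Q m : ℕ} {K : Subfield F}

theorem natCard_eq_of_forall_mem_iff_pow_eq (hF : Fintype.card F = Q ^ m)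
    (hK : ∀ x, x ∈ K ↔ x ^ Q = x) : Nat.card K = Q := by
  have hQ : 1 < Q := by
    by_contra! h
    exact (pow_le_one₀ zero_le h).not_gt (hF ▸ Fintype.one_lt_card)
  have hrange : (Units.map K.subtype.toMonoidHom).range =
      (powMonoidHom (Q - 1) : Fˣ →* Fˣ).ker := by
    ext u
    have hu : u ∈ (powMonoidHom (Q - 1) : Fˣ →* Fˣ).ker ↔ (u : F) ∈ K := by
      rw [MonoidHom.mem_ker, powMonoidHom_apply, hK, ← Units.val_pow_eq_pow_val, Units.val_inj,
        ← mul_eq_right (b := u), ← pow_succ, Nat.sub_add_cancel hQ.le]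
    rw [hu]
    constructor
    · rintro ⟨v, rfl⟩
      exact (v : K).2
    · intro h
      exact ⟨Units.mk0 ⟨u, h⟩ (by simp [← Subtype.coe_ne_coe]), Units.ext rfl⟩
  have hunits : Nat.card Kˣ = Q - 1 := by
    rw [Nat.card_congr (MonoidHom.ofInjective (Units.map_injective K.subtype_injective)).toEquiv,
      hrange, IsCyclic.card_powMonoidHom_ker, Nat.card_units, Nat.card_eq_fintype_card, hF]
    exact Nat.gcd_eq_right (by simpa using Nat.sub_dvd_pow_sub_pow Q 1 m)
  have := Nat.card_units K
  have := Nat.card_pos (α := K)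
  omega

theorem finrank_eq_of_forall_mem_iff_pow_eq (hF : Fintype.card F = Q ^ m)
    (hK : ∀ x, x ∈ K ↔ x ^ Q = x) : Module.finrank K F = m := by
  have hcard := natCard_eq_of_forall_mem_iff_pow_eq hF hK
  have hQ : 1 < Q := hcard ▸ Finite.one_lt_card
  apply Nat.pow_right_injective hQ
  change Q ^ _ = Q ^ m
  rw [← hF, ← Nat.card_eq_fintype_card, Module.natCard_eq_pow_finrank (K := K) (V := F), hcard]

end FixedField

theorem mul_dvd_mul_sq_sub_one {q s : ℕ} (hs : 2 * s = q ^ 2 + 1) :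
    (q + 1) * (q ^ 2 + 1) ∣ s * (q ^ 2 - 1) := by
  obtain ⟨t, rfl⟩ : Odd q := (Nat.odd_pow_iff two_ne_zero).mp ⟨s - 1, by omega⟩
  refine ⟨t, ?_⟩
  have h : (2 * t + 1) ^ 2 - 1 = 2 * t * (2 * t + 1 + 1) := by
    rw [Nat.sub_eq_of_eq_add]
    ring
  rw [h, ← hs]
  ring

theorem constacyclic_code_is_MDS_general {F : Type*} [Field F] [Fintype F] [DecidableEq F]
    {Q n r N s δ : ℕ} (hF : Fintype.card F = Q ^ 2) (hN : N = r * n) (hr : r ≠ 0) (hn : n ∣ Q + 1)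
    (hs : N ∣ s * (Q - 1)) (hδ : 2 * δ + 1 < n) {β : F} (hβ : IsPrimitiveRoot β N)
    {K : Subfield F} (hK : ∀ x : F, x ∈ K ↔ x ^ Q = x) {C : Submodule K (Fin n → K)}
    (hC : ∀ c : Fin n → K, c ∈ C ↔ ∀ i : ℤ, -(δ : ℤ) ≤ i → i ≤ (δ : ℤ) →
      ∑ k : Fin n, (c k : F) * β ^ (((s : ℤ) + (r : ℤ) * i) * ((k : ℕ) : ℤ)) = 0) :
    Module.finrank K C = n - (2 * δ + 1) ∧
    (∀ c ∈ C, c ≠ 0 → 2 * δ + 2 ≤ hammingNorm c) ∧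
    (∃ c ∈ C, c ≠ 0 ∧ hammingNorm c = 2 * δ + 2) := by
  have hN₀ : 0 < N := hN ▸ Nat.mul_pos (Nat.pos_of_ne_zero hr) (by omega)
  have hβ₀ : β ≠ 0 := hβ.ne_zero hN₀.ne'
  have : Algebra.IsQuadraticExtension K F := ⟨finrank_eq_of_forall_mem_iff_pow_eq hF hK⟩
  have : Fintype K := Fintype.ofFinite K
  have hcard : Fintype.card K = Q := by
    rw [← Nat.card_eq_fintype_card, natCard_eq_of_forall_mem_iff_pow_eq hF hK]
  have hα : β ^ s ∈ K := by
    have hQ : 1 ≤ Q := hcard ▸ Fintype.card_pos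
    rw [hK, ← pow_mul, ← Nat.sub_add_cancel hQ, mul_add_one, pow_add,
      (hβ.pow_eq_one_iff_dvd _).mpr hs, one_mul]
  let w (k : Fin n) : K := ⟨β ^ s, hα⟩ ^ (k : ℕ)
  let x (k : Fin n) : F := (β ^ r) ^ (k : ℕ)
  have hw (k : Fin n) : w k ≠ 0 :=
    pow_ne_zero _ fun h => pow_ne_zero s hβ₀ (congrArg Subtype.val h)
  have hx₀ (k : Fin n) : x k ≠ 0 := pow_ne_zero _ (pow_ne_zero _ hβ₀)
  have hγ : IsPrimitiveRoot (β ^ r) n := hβ.pow hN₀ hN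
  have hx : Function.Injective x := fun a b hab => Fin.ext (hγ.pow_inj a.2 b.2 hab)
  have hσ (k : Fin n) : FiniteField.frobeniusAlgHom K F (x k) = (x k)⁻¹ := by
    rw [FiniteField.frobeniusAlgHom_apply, hcard, ← mul_eq_one_iff_eq_inv₀ (hx₀ k), ← pow_succ,
      pow_right_comm, (hγ.pow_eq_one_iff_dvd _).mpr hn, one_pow]
  have hpow (k : ℕ) (i : ℤ) :
      β ^ (((s : ℤ) + r * i) * k) = (β ^ s) ^ k * ((β ^ r) ^ k) ^ i := by
    simp only [← zpow_natCast, ← zpow_mul, ← zpow_add₀ hβ₀]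
    ring_nf
  have hCode : C = symmetricCode w x δ := by
    ext c
    simp only [hC, mem_symmetricCode, syndrome_apply, Subfield.smul_def, smul_eq_mul, hpow, w, x,
      SubmonoidClass.coe_pow]
  subst hCode
  exact ⟨by simpa using finrank_symmetricCode hw hx₀ hx hσ,
    fun c => lt_hammingNorm_of_mem_symmetricCode hw hx₀ hx,
    exists_mem_symmetricCode_hammingNorm_eq hw hx₀ hx hσ (by simpa using hδ)⟩

/-- The constacyclic code `C` (of length `n = q²+1`, with defining set
`{s + ri : −δ ≤ i ≤ δ}`) is an MDS code with parameters `[q²+1, q² − 2δ, 2δ + 2]`: its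
dimension over `K` equals `q² − 2δ`, and the least Hamming weight of a nonzero codeword
of `C` equals exactly `2δ + 2`. -/
theorem constacyclic_code_is_MDS
    (q : ℕ) (hq : ∃ p k : ℕ, Nat.Prime p ∧ Odd p ∧ 0 < k ∧ q = p ^ k)
    (n N s δ : ℕ) (hn : n = q ^ 2 + 1) (hN : N = (q + 1) * n)
    (hs : 2 * s = q ^ 2 + 1) (hδ : 2 * δ ≤ q - 1)
    (F : Type*) [Field F] [Fintype F] [DecidableEq F] (hF : Fintype.card F = q ^ 4)
    (β : F) (hβ : IsPrimitiveRoot β N)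
    (K : Subfield F) (hK : ∀ x : F, x ∈ K ↔ x ^ (q ^ 2) = x)
    (C : Submodule K (Fin n → K))
    (hC : ∀ c : Fin n → K, c ∈ C ↔ ∀ i : ℤ, -(δ : ℤ) ≤ i → i ≤ (δ : ℤ) →
      ∑ k : Fin n, (c k : F) * β ^ ((((s : ℤ) + ((q : ℤ) + 1) * i)) * ((k : ℕ) : ℤ)) = 0) :
    Module.finrank K C = q ^ 2 - 2 * δ ∧
    (∀ c ∈ C, c ≠ 0 → 2 * δ + 2 ≤ hammingNorm c) ∧
    (∃ c ∈ C, c ≠ 0 ∧ hammingNorm c = 2 * δ + 2) := by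
  subst hN hn
  simpa using constacyclic_code_is_MDS_general (hF.trans (pow_mul q 2 2)) rfl q.succ_ne_zero dvd_rfl
    (mul_dvd_mul_sq_sub_one hs)
    (by have := Nat.le_self_pow two_ne_zero q; omega) hβ hK (mod_cast hC)
end
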